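/- Let X > 1, let E₁(z) = ∫_0^∞ e^{−z−t}/(z+t) dt for z ∈ ℂ not on the closed negative real axis, let u : ℝ → ℝ be a smooth (C^∞) nonnegative function supported in [1,e] with ∫ u(y) dy = 1, and set U(z) = ∫_1^e u(y) E₁(z log y) dy. Define F_X(ϑ) = −Log(1 − e^{−iϑ}) − Σ_{j∈ℤ} U(i(ϑ + 2πj) log X) for real ϑ with ϑ/(2π) ∉ ℤ. Then: (a) for each such ϑ the series over j converges absolutely; (b) F_X is Lebesgue-integrable on (−π,π); and (c) for every integer m, (1/(2π)) ∫_{−π}^{π} F_X(−ϑ) e^{−imϑ} dϑ equals 0 if m ≤ 0, and equals (1/m) ∫_{min(e^{m/log X}, e)}^{e} u(y) dy if m ≥ 1 (in particular it equals 0 for m ≥ log X). -/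

import Mathlib

open MeasureTheory Complex

/-- The principal exponential integral `E₁(z) = ∫_0^∞ e^{−z−t}/(z+t) dt`. -/
noncomputable def expInt (z : ℂ) : ℂ := ∫ t in Set.Ioi (0 : ℝ), Complex.exp (-z - t) / (z + t)

/-- `U(z) = ∫_1^e u(y) E₁(z log y) dy`. -/
noncomputable def Ufun (u : ℝ → ℝ) (z : ℂ) : ℂ :=
  ∫ y in (1 : ℝ)..(Real.exp 1), (u y : ℂ) * expInt (z * Real.log y)

/-- `F_X(ϑ) = −Log(1 − e^{−iϑ}) − Σ_{j∈ℤ} U(i(ϑ + 2πj) log X)`. -/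
noncomputable def FX (u : ℝ → ℝ) (X : ℝ) (ϑ : ℝ) : ℂ :=
  -Complex.log (1 - Complex.exp (-(Complex.I * ϑ))) -
    ∑' j : ℤ, Ufun u (Complex.I * ((ϑ : ℂ) + 2 * Real.pi * j) * Real.log X)

/-!
In the variable `s = L log y`, `L = log X`, the measure `u(y) dy` becomes `k(s) ds`, and
`U(zL) = ∫ k(s) E₁(zs) ds`. Since `E₁(zs) = ∫_s^∞ e^{-zw}/w dw`, this is the Laplace transform of
the running mean `w ↦ w⁻¹ ∫_0^w k`, an average of the dilates of `k`; two integrations by parts in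
each dilate make it `O(|z|⁻²)`. Poisson summation, applied to the running mean damped by `e^{-εw}`,
then turns `∑_j U((ε + iϑ + 2πij)L)` into `∑_{n ≥ 1} n⁻¹ (1 - ∫_n^∞ k) e^{-n(ε + iϑ)}`. The terms
`n⁻¹ e^{-n(ε + iϑ)}` add up to `-Log(1 - e^{-ε - iϑ})`, and `∫_n^∞ k = 0` for `n ≥ L`. Letting
`ε → 0`, `F_X` is, off `2πℤ`, the trigonometric polynomial `∑_{1 ≤ n < L} n⁻¹ (∫_n^∞ k) e^{-inϑ}`.
-/

open Filter Topology Set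
open scoped FourierTransform

/-- The Laplace transform of a function on the half-line. -/
noncomputable def laplaceTransform (g : ℝ → ℂ) (z : ℂ) : ℂ :=
  ∫ w in Ioi (0 : ℝ), g w * exp (-z * w)

/-- The mean of `k` over the segment from `0` to `w` (the Hardy averaging operator), written so that
its value at `w = 0` is `k 0`. -/
noncomputable def runningMean (k : ℝ → ℂ) (w : ℝ) : ℂ :=
  ∫ t in (0 : ℝ)..1, k (t * w)

/-- The superposition of dilated exponential integrals with density `k`. -/
noncomputable def expIntTransform (k : ℝ → ℂ) (z : ℂ) : ℂ :=
  ∫ s in Ioi (0 : ℝ), k s * expInt (z * s)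

theorem norm_cexp_div_add_le {z : ℂ} (hz : z.im ≠ 0) (t : ℝ) :
    ‖exp (-z - t) / (z + t)‖ ≤ Real.exp (-z.re) / |z.im| * Real.exp (-t) := by
  have him : |z.im| ≤ ‖z + t‖ := by simpa using abs_im_le_norm (z + t)
  have : 0 < |z.im| := abs_pos.mpr hz
  calc ‖exp (-z - t) / (z + t)‖ = Real.exp (-z.re) * Real.exp (-t) / ‖z + t‖ := by
        simp [norm_exp, sub_eq_add_neg, Real.exp_add]
    _ ≤ Real.exp (-z.re) * Real.exp (-t) / |z.im| := by gcongr
    _ = _ := by ring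

theorem norm_expInt_le {z : ℂ} (hz : z.im ≠ 0) : ‖expInt z‖ ≤ Real.exp (-z.re) / |z.im| := by
  calc ‖expInt z‖ ≤ ∫ t in Ioi (0 : ℝ), Real.exp (-z.re) / |z.im| * Real.exp (-t) :=
        norm_integral_le_of_norm_le ((integrableOn_exp_neg_Ioi 0).const_mul _)
          (Eventually.of_forall (norm_cexp_div_add_le hz))
    _ = _ := by rw [integral_const_mul, integral_exp_neg_Ioi_zero, mul_one]

theorem continuousAt_expInt {z : ℂ} (hz : z.im ≠ 0) : ContinuousAt expInt z := by
  have hre : ∀ᶠ x in 𝓝 z, z.re - 1 < x.re :=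
    continuous_re.continuousAt.eventually_const_lt (by linarith)
  have him : ∀ᶠ x in 𝓝 z, |z.im| / 2 < |x.im| :=
    continuous_im.abs.continuousAt.eventually_const_lt (half_lt_self (abs_pos.mpr hz))
  refine continuousAt_of_dominated
    (bound := fun t => Real.exp (1 - z.re) / (|z.im| / 2) * Real.exp (-t))
    (Eventually.of_forall fun x => (by fun_prop : Measurable _).aestronglyMeasurable) ?_
    ((integrableOn_exp_neg_Ioi 0).const_mul _) (Eventually.of_forall fun t => ?_)
  · filter_upwards [hre, him] with x hxre hxim
    have hpos : 0 < |z.im| / 2 := half_pos (abs_pos.mpr hz)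
    refine Eventually.of_forall fun t =>
      (norm_cexp_div_add_le (abs_pos.mp (hpos.trans hxim)) t).trans ?_
    gcongr
    linarith
  · refine ContinuousAt.div (by fun_prop) (by fun_prop) fun h => hz ?_
    simpa using congrArg im h

theorem norm_expInt_mul_ofReal_le {z : ℂ} (hz : 0 ≤ z.re) (hz' : z.im ≠ 0) {s : ℝ} (hs : 0 < s) :
    ‖expInt (z * s)‖ ≤ 1 / (|z.im| * s) := by
  have him : (z * s).im ≠ 0 := by simpa using ⟨hz', hs.ne'⟩
  calc ‖expInt (z * s)‖ ≤ Real.exp (-(z * s).re) / |(z * s).im| := norm_expInt_le him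
    _ ≤ 1 / (|z.im| * s) := by
        rw [im_mul_ofReal, abs_mul, abs_of_pos hs, re_mul_ofReal]
        gcongr
        exact Real.exp_le_one_iff.mpr (neg_nonpos.mpr (mul_nonneg hz hs.le))

theorem integrable_exp_mul_mul_exp_div_mul {z : ℂ} (hz : 0 < z.re) {s : ℝ} (hs : 0 < s) :
    Integrable (Function.uncurry fun t w : ℝ => exp (-z * w) * exp (-(w / s : ℝ) * t) / s)
      ((volume.restrict (Ioi 0)).prod (volume.restrict (Ioi s))) := by
  refine (((integrableOn_exp_neg_Ioi 0).mul_prod (integrableOn_exp_mul_Ioi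
    (neg_neg_of_pos hz) s)).div_const s).mono' ?_ ?_
  · exact Measurable.aestronglyMeasurable (by unfold Function.uncurry; fun_prop)
  rw [Measure.prod_restrict]
  filter_upwards [ae_restrict_mem (measurableSet_Ioi.prod measurableSet_Ioi)]
    with ⟨t, w⟩ ⟨ht, hw⟩
  have hws : 1 ≤ w / s := (one_le_div hs).mpr (le_of_lt hw)
  have hle : t ≤ w / s * t := le_mul_of_one_le_left (le_of_lt ht) hws
  simp only [Function.uncurry_apply_pair, norm_div, norm_mul, norm_exp, norm_real,
    Real.norm_of_nonneg hs.le]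
  rw [mul_comm (Real.exp (-t))]
  gcongr
  · simp
  · simpa [← ofReal_div, ← ofReal_mul] using hle

-- Both exponentials come from `exp (-(z + t / s) * w)`, integrated over `w` or over `t` first.
theorem expInt_mul_ofReal {z : ℂ} (hz : 0 < z.re) {s : ℝ} (hs : 0 < s) :
    expInt (z * s) = ∫ w in Ioi s, exp (-z * w) / w := by
  have hs' : (s : ℂ) ≠ 0 := ofReal_ne_zero.mpr hs.ne'
  have integral_w : ∀ t ∈ Ioi (0 : ℝ), exp (-(z * s) - t) / (z * s + t)
      = ∫ w in Ioi s, exp (-z * w) * exp (-(w / s : ℝ) * t) / s := fun t ht => by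
    have hre : 0 < (z + t / s).re := by
      rw [← ofReal_div, add_re, ofReal_re]
      exact add_pos hz (div_pos ht hs)
    have : z + t / s ≠ 0 := fun h => hre.ne' (by simp [h])
    have hexp : ∀ w : ℝ, exp (-z * w) * exp (-(w / s : ℝ) * t) / s
        = exp (-(z + t / s) * w) / s := fun w => by
      rw [← exp_add]
      push_cast
      ring_nf
    simp only [hexp]
    rw [integral_div, integral_exp_mul_complex_Ioi (neg_neg_of_pos hre)]
    field_simp
    ring_nf
  have integral_t : ∀ w ∈ Ioi s, ∫ t in Ioi (0 : ℝ), exp (-z * w) * exp (-(w / s : ℝ) * t) / s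
      = exp (-z * w) / w := fun w hw => by
    have hw0 : 0 < w := hs.trans hw
    have hw' : (w : ℂ) ≠ 0 := ofReal_ne_zero.mpr hw0.ne'
    rw [integral_div, integral_const_mul,
      integral_exp_mul_complex_Ioi (by rw [neg_re, ofReal_re]; simpa using div_pos hw0 hs)]
    simp only [neg_mul, ofReal_div, ofReal_zero, mul_zero, exp_zero, neg_div_neg_eq, one_div,
      inv_div]
    field_simp
  rw [expInt, setIntegral_congr_fun measurableSet_Ioi integral_w,
    integral_integral_swap (integrable_exp_mul_mul_exp_div_mul hz hs),
    setIntegral_congr_fun measurableSet_Ioi integral_t]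

section ExpIntTransform

variable {k : ℝ → ℂ}

theorem continuousWithinAt_expIntTransform (hk : IntegrableOn (fun s => k s / s) (Ioi 0)) {z : ℂ}
    (hz : z.im ≠ 0) : ContinuousWithinAt (expIntTransform k) {x | 0 ≤ x.re} z := by
  have im_mul_ne {x : ℂ} (hx : x.im ≠ 0) {s : ℝ} (hs : 0 < s) : (x * s).im ≠ 0 := by
    simpa using ⟨hx, hs.ne'⟩
  have him : ∀ᶠ x in 𝓝[{x | 0 ≤ x.re}] z, |z.im| / 2 < |x.im| := nhdsWithin_le_nhds <|
    continuous_im.abs.continuousAt.eventually_const_lt (half_lt_self (abs_pos.mpr hz))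
  have hpos : 0 < |z.im| / 2 := half_pos (abs_pos.mpr hz)
  refine MeasureTheory.continuousWithinAt_of_dominated
    (bound := fun s => ‖k s / s‖ / (|z.im| / 2)) ?_ ?_ (hk.norm.div_const _) ?_
  · filter_upwards [him] with x hxim
    have hx : x.im ≠ 0 := abs_pos.mp (hpos.trans hxim)
    have hcont : ContinuousOn (fun s : ℝ => s * expInt (x * s)) (Ioi 0) := fun s hs =>
      ((continuous_ofReal.continuousAt).mul <| (continuousAt_expInt (im_mul_ne hx hs)).comp
        (f := fun s : ℝ => x * s) (by fun_prop)).continuousWithinAt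
    refine (hk.aestronglyMeasurable.mul (hcont.aestronglyMeasurable measurableSet_Ioi)).congr ?_
    filter_upwards [ae_restrict_mem measurableSet_Ioi] with s hs
    have hs' : (s : ℂ) ≠ 0 := ofReal_ne_zero.mpr (ne_of_gt hs)
    simp only [Pi.mul_apply]
    field_simp
  · filter_upwards [him, self_mem_nhdsWithin] with x hxim hxre
    filter_upwards [ae_restrict_mem measurableSet_Ioi] with s (hs : 0 < s)
    have hx : x.im ≠ 0 := abs_pos.mp (hpos.trans hxim)
    calc ‖k s * expInt (x * s)‖ ≤ ‖k s‖ * (1 / (|x.im| * s)) := by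
          rw [norm_mul]
          gcongr
          exact norm_expInt_mul_ofReal_le hxre hx hs
      _ ≤ ‖k s‖ * (1 / (|z.im| / 2 * s)) := by gcongr
      _ = ‖k s / s‖ / (|z.im| / 2) := by
          rw [norm_div, norm_real, Real.norm_of_nonneg hs.le]
          ring
  · filter_upwards [ae_restrict_mem measurableSet_Ioi] with s hs
    exact (continuousAt_const.mul <| (continuousAt_expInt (im_mul_ne hz hs)).comp
      (f := fun x : ℂ => x * s) (by fun_prop)).continuousWithinAt

theorem runningMean_eq_div (k : ℝ → ℂ) {w : ℝ} (hw : w ≠ 0) :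
    runningMean k w = (∫ s in (0 : ℝ)..w, k s) / w := by
  rw [runningMean, intervalIntegral.integral_comp_mul_right _ hw, zero_mul, one_mul,
    Complex.real_smul, ofReal_inv, inv_mul_eq_div]

theorem integrable_indicator_Ioi_mul_exp_div (hk : IntegrableOn (fun s => k s / s) (Ioi 0)) {z : ℂ}
    (hz : 0 < z.re) : Integrable (Function.uncurry fun s w : ℝ =>
      (Ioi s).indicator (fun w : ℝ => k s * (exp (-z * w) / w)) w)
      ((volume.restrict (Ioi 0)).prod (volume.restrict (Ioi 0))) := by
  have hprod := hk.mul_prod (integrableOn_exp_mul_complex_Ioi (a := -z) (by simpa using hz) 0)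
  have hmeas : Measurable fun p : ℝ × ℝ =>
      {p : ℝ × ℝ | p.1 < p.2}.indicator (fun p => ((p.1 / p.2 : ℝ) : ℂ)) p :=
    Measurable.indicator (by fun_prop) (measurableSet_lt measurable_fst measurable_snd)
  refine (hprod.mul_bdd (c := 1) hmeas.aestronglyMeasurable ?_).congr ?_
  all_goals
    rw [Measure.prod_restrict]
    filter_upwards [ae_restrict_mem (measurableSet_Ioi.prod measurableSet_Ioi)]
      with ⟨s, w⟩ ⟨(hs : 0 < s), (hw : 0 < w)⟩
  · rw [indicator_apply]
    split_ifs with hsw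
    · rw [norm_real, Real.norm_of_nonneg (by positivity)]
      exact (div_le_one hw).mpr (le_of_lt hsw)
    · simp
  · by_cases hsw : s < w
    · have hs' : (s : ℂ) ≠ 0 := ofReal_ne_zero.mpr hs.ne'
      simp [indicator_apply, hsw]
      field_simp
    · simp [indicator_apply, hsw]

theorem expIntTransform_eq_laplaceTransform (hk : IntegrableOn (fun s => k s / s) (Ioi 0)) {z : ℂ}
    (hz : 0 < z.re) : expIntTransform k z = laplaceTransform (runningMean k) z := by
  have integral_w : ∀ s ∈ Ioi (0 : ℝ), k s * expInt (z * s)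
      = ∫ w in Ioi (0 : ℝ), (Ioi s).indicator (fun w : ℝ => k s * (exp (-z * w) / w)) w :=
    fun s hs => by
      rw [expInt_mul_ofReal hz hs, ← integral_const_mul, setIntegral_indicator measurableSet_Ioi,
        Ioi_inter_Ioi, max_eq_right (le_of_lt hs)]
  have integral_s : ∀ w ∈ Ioi (0 : ℝ),
      ∫ s in Ioi (0 : ℝ), (Ioi s).indicator (fun w : ℝ => k s * (exp (-z * w) / w)) w
        = runningMean k w * exp (-z * w) := fun w hw => by
    have hswap : ∀ s, (Ioi s).indicator (fun w : ℝ => k s * (exp (-z * w) / w)) w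
        = (Iio w).indicator (fun s => k s * (exp (-z * w) / w)) s := fun s => by
      simp only [indicator_apply, mem_Ioi, mem_Iio]
    simp only [hswap]
    rw [setIntegral_indicator measurableSet_Iio, Ioi_inter_Iio, integral_mul_const,
      runningMean_eq_div k (ne_of_gt hw), intervalIntegral.integral_of_le (le_of_lt hw),
      integral_Ioc_eq_integral_Ioo]
    ring
  rw [expIntTransform, setIntegral_congr_fun measurableSet_Ioi integral_w,
    integral_integral_swap (integrable_indicator_Ioi_mul_exp_div hk hz),
    setIntegral_congr_fun measurableSet_Ioi integral_s]
  rfl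

end ExpIntTransform

theorem integrable_div_ofReal {k : ℝ → ℂ} (hk : Continuous k) (hc : HasCompactSupport k)
    (hd : DifferentiableAt ℝ k 0) (h0 : k 0 = 0) : Integrable fun s => k s / s := by
  have hslope {s : ℝ} (hs : s ≠ 0) : dslope k 0 s = k s / s := by
    rw [dslope_of_ne k hs, slope_def_module, sub_zero, h0, sub_zero, real_smul, ofReal_inv,
      inv_mul_eq_div]
  have hcont : Continuous (dslope k 0) :=
    continuousOn_univ.mp ((continuousOn_dslope univ_mem).mpr ⟨hk.continuousOn, hd⟩)
  have hcompact : HasCompactSupport (dslope k 0) :=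
    HasCompactSupport.intro (hc.isCompact.insert 0) fun s hs => by
      rw [mem_insert_iff, not_or] at hs
      rw [hslope hs.1, image_eq_zero_of_notMem_tsupport hs.2, zero_div]
  refine (hcont.integrable_of_hasCompactSupport hcompact).congr ?_
  filter_upwards [Measure.ae_ne volume 0] with s hs using hslope hs

section LaplaceTransform

variable {k : ℝ → ℂ} {z : ℂ}

theorem norm_laplaceTransform_le (hk : IntegrableOn k (Ioi 0)) (hz : 0 ≤ z.re) :
    ‖laplaceTransform k z‖ ≤ ∫ w in Ioi (0 : ℝ), ‖k w‖ := by
  refine norm_integral_le_of_norm_le hk.norm ?_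
  filter_upwards [ae_restrict_mem measurableSet_Ioi] with w (hw : 0 < w)
  rw [norm_mul, norm_exp, re_mul_ofReal, neg_re]
  refine mul_le_of_le_one_right (norm_nonneg _) (Real.exp_le_one_iff.mpr ?_)
  exact mul_nonpos_of_nonpos_of_nonneg (neg_nonpos.mpr hz) hw.le

theorem laplaceTransform_deriv (hk : ContDiff ℝ 1 k) (hc : HasCompactSupport k) (z : ℂ) :
    laplaceTransform (deriv k) z = z * laplaceTransform k z - k 0 := by
  have hexp : ContDiff ℝ 1 fun w : ℝ => exp (-z * w) :=
    (contDiff_const.mul ofRealCLM.contDiff).cexp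
  have hderiv (w : ℝ) : deriv (fun w : ℝ => k w * exp (-z * w)) w
      = deriv k w * exp (-z * w) - z * (k w * exp (-z * w)) := by
    have hlin : HasDerivAt (fun w : ℝ => -z * w) (-z) w := by
      simpa using (ofRealCLM.hasDerivAt (x := w)).const_mul (-z)
    rw [((hk.differentiable one_ne_zero w).hasDerivAt.fun_mul hlin.cexp).deriv]
    ring
  have hint {g : ℝ → ℂ} (hg : Continuous g) (hgc : HasCompactSupport g) :
      IntegrableOn (fun w : ℝ => g w * exp (-z * w)) (Ioi 0) :=
    ((hg.mul hexp.continuous).integrable_of_hasCompactSupport hgc.mul_right).integrableOn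
  have hftc := HasCompactSupport.integral_Ioi_deriv_eq (hk.mul hexp) hc.mul_right 0
  simp only [hderiv] at hftc
  rw [integral_sub (hint (hk.continuous_deriv le_rfl) hc.deriv)
    ((hint hk.continuous hc).const_mul z), integral_const_mul] at hftc
  simp only [ofReal_zero, mul_zero, exp_zero, mul_one] at hftc
  rw [laplaceTransform, laplaceTransform, sub_eq_iff_eq_add.mp hftc]
  ring

theorem norm_laplaceTransform_le_div_sq (hk : ContDiff ℝ 2 k) (hc : HasCompactSupport k)
    (h0 : k 0 = 0) (h1 : deriv k 0 = 0) (hz : 0 ≤ z.re) (hz0 : z ≠ 0) :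
    ‖laplaceTransform k z‖ ≤ (∫ w in Ioi (0 : ℝ), ‖deriv (deriv k) w‖) / ‖z‖ ^ 2 := by
  have hk' : ContDiff ℝ 1 (deriv k) := (contDiff_succ_iff_deriv.mp hk).2.2
  have htwice : laplaceTransform (deriv (deriv k)) z = z ^ 2 * laplaceTransform k z := by
    rw [laplaceTransform_deriv hk' hc.deriv, laplaceTransform_deriv (hk.of_le one_le_two) hc, h0,
      h1]
    ring
  rw [le_div_iff₀ (by positivity), mul_comm, ← norm_pow, ← norm_mul, ← htwice]
  exact norm_laplaceTransform_le ((hk'.continuous_deriv le_rfl).integrable_of_hasCompactSupport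
    hc.deriv.deriv).integrableOn hz

theorem laplaceTransform_comp_mul_left (k : ℝ → ℂ) (z : ℂ) {t : ℝ} (ht : 0 < t) :
    laplaceTransform (fun w => k (t * w)) z = (t : ℂ)⁻¹ * laplaceTransform k (z / t) := by
  have h := integral_comp_mul_left_Ioi (fun w : ℝ => k w * exp (-(z / t) * w)) 0 ht
  rw [mul_zero, real_smul, ofReal_inv] at h
  rw [laplaceTransform, laplaceTransform, ← h]
  have ht' : (t : ℂ) ≠ 0 := ofReal_ne_zero.mpr ht.ne'
  congr! 4 with w
  push_cast
  field_simp

theorem laplaceTransform_runningMean (hk : Continuous k) {B : ℝ} (hB : ∀ w, ‖k w‖ ≤ B)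
    (hz : 0 < z.re) : laplaceTransform (runningMean k) z
      = ∫ t in (0 : ℝ)..1, laplaceTransform (fun w => k (t * w)) z := by
  have integrable : Integrable (Function.uncurry fun w t : ℝ => k (t * w) * exp (-z * w))
      ((volume.restrict (Ioi 0)).prod (volume.restrict (Ioc 0 1))) :=
    ((integrableOn_exp_mul_complex_Ioi (a := -z) (by simpa using hz) 0).comp_fst
      (volume.restrict (Ioc (0 : ℝ) 1))).bdd_mul (c := B)
      (Continuous.aestronglyMeasurable (by fun_prop)) (Eventually.of_forall fun _ => hB _)
  simp only [laplaceTransform, runningMean, intervalIntegral.integral_of_le zero_le_one,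
    ← integral_mul_const]
  exact integral_integral_swap integrable

theorem norm_laplaceTransform_runningMean_le (hk : ContDiff ℝ 2 k) (hc : HasCompactSupport k)
    (h0 : k 0 = 0) (h1 : deriv k 0 = 0) (hz : 0 < z.re) :
    ‖laplaceTransform (runningMean k) z‖
      ≤ (∫ w in Ioi (0 : ℝ), ‖deriv (deriv k) w‖) / ‖z‖ ^ 2 := by
  set C := ∫ w in Ioi (0 : ℝ), ‖deriv (deriv k) w‖
  have : 0 ≤ C := integral_nonneg fun _ => norm_nonneg _
  have hz0 : z ≠ 0 := fun h => hz.ne' (by simp [h])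
  obtain ⟨B, hB⟩ := hc.exists_bound_of_continuous hk.continuous
  have hdilate : ∀ t ∈ uIoc (0 : ℝ) 1, ‖laplaceTransform (fun w => k (t * w)) z‖ ≤ C / ‖z‖ ^ 2 := by
    intro t ht
    obtain ⟨ht0, ht1⟩ := uIoc_of_le (zero_le_one' ℝ) ▸ ht
    have hle := norm_laplaceTransform_le_div_sq (z := z / t) hk hc h0 h1
      (by rw [div_ofReal_re]; positivity) (div_ne_zero hz0 (ofReal_ne_zero.mpr ht0.ne'))
    rw [norm_div, norm_real, Real.norm_of_nonneg ht0.le] at hle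
    calc ‖laplaceTransform (fun w => k (t * w)) z‖
        = t⁻¹ * ‖laplaceTransform k (z / t)‖ := by
          rw [laplaceTransform_comp_mul_left k z ht0, norm_mul, norm_inv, norm_real,
            Real.norm_of_nonneg ht0.le]
      _ ≤ t⁻¹ * (C / (‖z‖ / t) ^ 2) := by gcongr
      _ = t * (C / ‖z‖ ^ 2) := by field_simp
      _ ≤ C / ‖z‖ ^ 2 := mul_le_of_le_one_left (by positivity) ht1
  rw [laplaceTransform_runningMean hk.continuous hB hz]
  simpa using intervalIntegral.norm_integral_le_of_norm_le_const hdilate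

end LaplaceTransform

theorem norm_expIntTransform_le {k : ℝ → ℂ} (hk : ContDiff ℝ 2 k) (hc : HasCompactSupport k)
    (h0 : k 0 = 0) (h1 : deriv k 0 = 0) {z : ℂ} (hz : 0 ≤ z.re) (hz' : z.im ≠ 0) :
    ‖expIntTransform k z‖ ≤ (∫ w in Ioi (0 : ℝ), ‖deriv (deriv k) w‖) / z.im ^ 2 := by
  have hk_div := (integrable_div_ofReal hk.continuous hc
    (hk.differentiable two_ne_zero 0) h0).integrableOn (s := Ioi 0)
  have hz0 : ‖z‖ ^ 2 ≠ 0 := by simpa using fun h : z = 0 => hz' (by simp [h])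
  calc ‖expIntTransform k z‖ ≤ (∫ w in Ioi (0 : ℝ), ‖deriv (deriv k) w‖) / ‖z‖ ^ 2 := by
        have hmem : z ∈ closure {x : ℂ | 0 < x.re} := by rwa [closure_setOfPred_lt_re]
        have hcont : ContinuousWithinAt (expIntTransform k) {x | 0 < x.re} z :=
          (continuousWithinAt_expIntTransform hk_div hz').mono fun x (hx : 0 < x.re) => hx.le
        have hbound : ContinuousAt (fun x : ℂ =>
            (∫ w in Ioi (0 : ℝ), ‖deriv (deriv k) w‖) / ‖x‖ ^ 2) z :=
          continuousAt_const.div (by fun_prop) hz0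
        refine hcont.norm.closure_le hmem hbound.continuousWithinAt fun x hx => ?_
        rw [expIntTransform_eq_laplaceTransform hk_div hx]
        exact norm_laplaceTransform_runningMean_le hk hc h0 h1 hx
    _ ≤ (∫ w in Ioi (0 : ℝ), ‖deriv (deriv k) w‖) / z.im ^ 2 := by
        rw [← sq_abs z.im]
        gcongr
        exact abs_im_le_norm z

theorem summable_inv_add_two_pi_mul_sq (ϑ : ℝ) :
    Summable fun j : ℤ => ((ϑ + 2 * Real.pi * j) ^ 2)⁻¹ := by
  have h := (Real.summable_one_div_int_add_rpow (ϑ / (2 * Real.pi)) 2).mpr one_lt_two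
  refine (h.mul_left ((2 * Real.pi) ^ 2)⁻¹).congr fun j => ?_
  rw [Real.rpow_two, sq_abs, one_div, ← mul_inv, ← mul_pow]
  congr 2
  field_simp
  ring

section RunningMean

variable {k : ℝ → ℂ}

theorem continuous_runningMean (hk : Continuous k) : Continuous (runningMean k) :=
  intervalIntegral.continuous_parametric_intervalIntegral_of_continuous' (by fun_prop) 0 1

theorem norm_runningMean_le {B : ℝ} (hB : ∀ w, ‖k w‖ ≤ B) (w : ℝ) : ‖runningMean k w‖ ≤ B := by
  simpa [runningMean] using intervalIntegral.norm_integral_le_of_norm_le_const (a := 0) (b := 1)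
    fun t _ => hB (t * w)

theorem runningMean_eq_zero (hk : ∀ s ≤ 0, k s = 0) {w : ℝ} (hw : w ≤ 0) : runningMean k w = 0 := by
  rw [runningMean, intervalIntegral.integral_congr (g := fun _ => 0) fun t ht => ?_,
    intervalIntegral.integral_zero]
  rw [uIcc_of_le zero_le_one] at ht
  exact hk _ (mul_nonpos_of_nonneg_of_nonpos ht.1 hw)

theorem runningMean_eq_one_sub_div (hk : IntegrableOn k (Ioi 0))
    (hmass : ∫ s in Ioi (0 : ℝ), k s = 1) {w : ℝ} (hw : 0 < w) :
    runningMean k w = (1 - ∫ s in Ioi w, k s) / w := by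
  rw [runningMean_eq_div k hw.ne', ← hmass,
    ← intervalIntegral.integral_Ioi_sub_Ioi hk hw.le]

end RunningMean

theorem tsum_mul_exp_eq_tsum_laplaceTransform {g : ℝ → ℂ} (hg : Continuous g) {B : ℝ}
    (hB : ∀ w, ‖g w‖ ≤ B) (hneg : ∀ w ≤ 0, g w = 0) {s : ℂ} (hs : 0 < s.re)
    (hsum : Summable fun j : ℤ => laplaceTransform g (s + 2 * Real.pi * j * I)) :
    ∑' n : ℤ, g n * exp (-s * n) = ∑' j : ℤ, laplaceTransform g (s + 2 * Real.pi * j * I) := by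
  set f : C(ℝ, ℂ) := ⟨fun w => g w * exp (-s * w), by fun_prop⟩ with hf
  have fourier_f (j : ℤ) : 𝓕 (f : ℝ → ℂ) j = laplaceTransform g (s + 2 * Real.pi * j * I) := by
    rw [Real.fourier_real_eq_integral_exp_smul, laplaceTransform,
      ← setIntegral_eq_integral_of_forall_compl_eq_zero fun w hw => ?_]
    · refine setIntegral_congr_fun measurableSet_Ioi fun w _ => ?_
      simp only [hf, ContinuousMap.coe_mk, smul_eq_mul]
      rw [mul_left_comm, ← exp_add]
      push_cast
      ring_nf
    · simp [hf, hneg w (not_lt.mp hw)]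
  have decay : (f : ℝ → ℂ) =O[cocompact ℝ] fun w => |w| ^ (-2 : ℝ) := by
    rw [cocompact_eq_atBot_atTop, Asymptotics.isBigO_sup]
    constructor
    · refine (Asymptotics.isBigO_zero _ _).congr' ?_ EventuallyEq.rfl
      filter_upwards [eventually_le_atBot 0] with w hw
      simp [hf, hneg w hw]
    · have hexp : (f : ℝ → ℂ) =O[atTop] fun w => Real.exp (-s.re * w) :=
        Asymptotics.IsBigO.of_bound B <| Eventually.of_forall fun w => by
          simp only [hf, ContinuousMap.coe_mk, norm_mul, norm_exp, re_mul_ofReal, neg_re,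
            Real.norm_of_nonneg (Real.exp_pos _).le]
          gcongr
          exact hB w
      refine hexp.trans ((isLittleO_exp_neg_mul_rpow_atTop hs (-2)).isBigO.congr' .rfl ?_)
      filter_upwards [eventually_ge_atTop 0] with w hw
      rw [abs_of_nonneg hw]
  have poisson := Real.tsum_eq_tsum_fourier_of_rpow_decay_of_summable f.continuous one_lt_two decay
    (by simpa only [fourier_f] using hsum) 0
  simp only [fourier_f] at poisson
  simpa [hf] using poisson

section Support

variable {M : Type*} [Zero M] {f : ℝ → M} {a b x : ℝ}

theorem eq_zero_of_support_subset_Ioo_of_le (hf : Function.support f ⊆ Ioo a b) (hx : x ≤ a) :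
    f x = 0 :=
  Function.notMem_support.mp fun h => hx.not_gt (hf h).1

theorem eq_zero_of_support_subset_Ioo_of_ge (hf : Function.support f ⊆ Ioo a b) (hx : b ≤ x) :
    f x = 0 :=
  Function.notMem_support.mp fun h => hx.not_gt (hf h).2

theorem hasCompactSupport_of_support_subset_Ioo (hf : Function.support f ⊆ Ioo a b) :
    HasCompactSupport f :=
  .of_support_subset_isCompact isCompact_Icc (hf.trans Ioo_subset_Icc_self)

theorem support_subset_Ioo_of_continuous [TopologicalSpace M] [T1Space M] (hf : Continuous f)
    (hsupp : Function.support f ⊆ Icc a b) : Function.support f ⊆ Ioo a b :=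
  interior_Icc (a := a) (b := b) ▸ interior_maximal hsupp hf.isOpen_support

end Support

theorem deriv_eq_zero_of_forall_le_eq_zero {E : Type*} [NormedAddCommGroup E] [NormedSpace ℝ E]
    {k : ℝ → E} {x : ℝ} (hk : DifferentiableAt ℝ k x)
    (h0 : ∀ s ≤ x, k s = 0) : deriv k x = 0 :=
  (uniqueDiffOn_Iic x x self_mem_Iic).eq_deriv _ hk.hasDerivAt.hasDerivWithinAt
    ((hasDerivWithinAt_const x (Iic x) 0).congr h0 (h0 x le_rfl))

theorem hasSum_exp_neg_mul_div {s : ℂ} (hs : 0 < s.re) :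
    HasSum (fun n : ℤ => if 1 ≤ n then exp (-s * n) / n else 0) (-log (1 - exp (-s))) := by
  have hlog := hasSum_taylorSeries_neg_log (z := exp (-s)) (by simpa [norm_exp] using hs)
  refine (Nat.cast_injective.hasSum_iff fun n hn => if_neg fun h => hn ?_).mp (hlog.congr_fun ?_)
  · exact ⟨n.toNat, Int.toNat_of_nonneg (by lia)⟩
  · intro n
    rcases n.eq_zero_or_pos with rfl | hn
    · simp
    · have h1 : (1 : ℤ) ≤ n := by exact_mod_cast hn
      simp [h1, ← exp_nat_mul, mul_comm]

theorem one_sub_exp_neg_mem_slitPlane {s : ℂ} (hs : 0 ≤ s.re)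
    (hs' : ∀ j : ℤ, s.im + 2 * Real.pi * j ≠ 0) : 1 - exp (-s) ∈ slitPlane := by
  refine .inl ?_
  have hcos : Real.cos s.im < 1 := (Real.cos_le_one _).lt_of_ne fun h => by
    obtain ⟨j, hj⟩ := (Real.cos_eq_one_iff _).mp h
    exact hs' (-j) (by rw [← hj]; push_cast; ring)
  have hlt : Real.exp (-s.re) * Real.cos s.im < 1 :=
    calc Real.exp (-s.re) * Real.cos s.im < Real.exp (-s.re) * 1 := by gcongr
      _ ≤ 1 := by simpa using hs
  simpa [exp_re] using hlt

section Periodization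

variable {k : ℝ → ℂ} {b : ℝ}

theorem integrableOn_div_ofReal_of_support_subset_Ioo (hk : ContDiff ℝ 2 k)
    (hsupp : Function.support k ⊆ Ioo 0 b) : IntegrableOn (fun s => k s / s) (Ioi 0) :=
  (integrable_div_ofReal hk.continuous (hasCompactSupport_of_support_subset_Ioo hsupp)
    (hk.differentiable two_ne_zero 0)
    (eq_zero_of_support_subset_Ioo_of_le hsupp le_rfl)).integrableOn

theorem exists_norm_expIntTransform_le (hk : ContDiff ℝ 2 k)
    (hsupp : Function.support k ⊆ Ioo 0 b) :
    ∃ C, ∀ z : ℂ, 0 ≤ z.re → z.im ≠ 0 → ‖expIntTransform k z‖ ≤ C * (z.im ^ 2)⁻¹ := by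
  have hneg : ∀ s ≤ 0, k s = 0 := fun s => eq_zero_of_support_subset_Ioo_of_le hsupp
  exact ⟨_, fun z => norm_expIntTransform_le hk
    (hasCompactSupport_of_support_subset_Ioo hsupp) (hneg 0 le_rfl)
    (deriv_eq_zero_of_forall_le_eq_zero (hk.differentiable two_ne_zero 0) hneg)⟩

theorem summable_expIntTransform (hk : ContDiff ℝ 2 k) (hsupp : Function.support k ⊆ Ioo 0 b)
    {s : ℂ} (hs : 0 ≤ s.re) (hs' : ∀ j : ℤ, s.im + 2 * Real.pi * j ≠ 0) :
    Summable fun j : ℤ => expIntTransform k (s + 2 * Real.pi * j * I) := by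
  obtain ⟨C, hC⟩ := exists_norm_expIntTransform_le hk hsupp
  refine .of_norm_bounded ((summable_inv_add_two_pi_mul_sq s.im).mul_left C) fun j => ?_
  simpa using hC (s + 2 * Real.pi * j * I) (by simpa using hs) (by simpa using hs' j)

theorem hasSum_runningMean_mul_exp (hk : Continuous k) (hsupp : Function.support k ⊆ Ioo 0 b)
    (hmass : ∫ s in Ioi (0 : ℝ), k s = 1) {s : ℂ} (hs : 0 < s.re) :
    HasSum (fun n : ℤ => runningMean k n * exp (-s * n)) (-log (1 - exp (-s))
      - ∑ n ∈ Finset.Ico 1 ⌈b⌉, (∫ w in Ioi (n : ℝ), k w) / n * exp (-s * n)) := by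
  have hint : Integrable k := hk.integrable_of_hasCompactSupport
    (hasCompactSupport_of_support_subset_Ioo hsupp)
  have htail {w : ℝ} (hw : b ≤ w) : ∫ s in Ioi w, k s = 0 :=
    setIntegral_eq_zero_of_forall_eq_zero fun s hs => Function.notMem_support.mp fun h =>
      ((hw.trans_lt hs).trans (hsupp h).2).false
  have hfin := hasSum_sum_of_ne_finset_zero (L := .unconditional ℤ) (s := Finset.Ico 1 ⌈b⌉)
    (f := fun n : ℤ => if 1 ≤ n then (∫ w in Ioi (n : ℝ), k w) / n * exp (-s * n) else 0)
    fun n hn => by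
      simp only [ite_eq_right_iff]
      intro h1
      have hbn : b ≤ n := Int.ceil_le.mp (by simpa [h1] using hn)
      rw [htail hbn, zero_div, zero_mul]
  rw [Finset.sum_congr rfl fun n hn => if_pos (Finset.mem_Ico.mp hn).1] at hfin
  refine ((hasSum_exp_neg_mul_div hs).sub hfin).congr_fun fun n => ?_
  split_ifs with h1
  · have hn : (0 : ℝ) < n := by exact_mod_cast h1
    rw [runningMean_eq_one_sub_div hint.integrableOn hmass hn, ofReal_intCast]
    ring
  · rw [runningMean_eq_zero (fun s => eq_zero_of_support_subset_Ioo_of_le hsupp)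
      (by exact_mod_cast (by lia : n ≤ 0))]
    simp

theorem neg_log_sub_tsum_expIntTransform_of_re_pos (hk : ContDiff ℝ 2 k)
    (hsupp : Function.support k ⊆ Ioo 0 b) (hmass : ∫ s in Ioi (0 : ℝ), k s = 1) {s : ℂ}
    (hs : 0 < s.re) (hs' : ∀ j : ℤ, s.im + 2 * Real.pi * j ≠ 0) :
    -log (1 - exp (-s)) - ∑' j : ℤ, expIntTransform k (s + 2 * Real.pi * j * I)
      = ∑ n ∈ Finset.Ico 1 ⌈b⌉, (∫ w in Ioi (n : ℝ), k w) / n * exp (-s * n) := by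
  have hc := hasCompactSupport_of_support_subset_Ioo hsupp
  have hneg : ∀ w ≤ 0, k w = 0 := fun w => eq_zero_of_support_subset_Ioo_of_le hsupp
  have hk_div := integrableOn_div_ofReal_of_support_subset_Ioo hk hsupp
  have hT (j : ℤ) : expIntTransform k (s + 2 * Real.pi * j * I)
      = laplaceTransform (runningMean k) (s + 2 * Real.pi * j * I) :=
    expIntTransform_eq_laplaceTransform hk_div (by simpa using hs)
  obtain ⟨B, hB⟩ := hc.exists_bound_of_continuous hk.continuous
  simp only [hT]
  rw [← tsum_mul_exp_eq_tsum_laplaceTransform (continuous_runningMean hk.continuous)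
    (norm_runningMean_le hB) (fun w => runningMean_eq_zero hneg) hs
    (by simpa only [hT] using summable_expIntTransform hk hsupp hs.le hs'),
    (hasSum_runningMean_mul_exp hk.continuous hsupp hmass hs).tsum_eq, sub_sub_cancel]

-- Both sides are continuous along `s + ε` for `ε ≥ 0`, and the identity is known for `ε > 0`.
theorem neg_log_sub_tsum_expIntTransform (hk : ContDiff ℝ 2 k)
    (hsupp : Function.support k ⊆ Ioo 0 b) (hmass : ∫ s in Ioi (0 : ℝ), k s = 1) {s : ℂ}
    (hs : 0 ≤ s.re) (hs' : ∀ j : ℤ, s.im + 2 * Real.pi * j ≠ 0) :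
    -log (1 - exp (-s)) - ∑' j : ℤ, expIntTransform k (s + 2 * Real.pi * j * I)
      = ∑ n ∈ Finset.Ico 1 ⌈b⌉, (∫ w in Ioi (n : ℝ), k w) / n * exp (-s * n) := by
  have hre {ε : ℝ} (hε : 0 ≤ ε) : 0 ≤ (s + ε).re := by simpa using add_nonneg hs hε
  have him (ε : ℝ) (j : ℤ) : (s + ε).im + 2 * Real.pi * j ≠ 0 := by simpa using hs' j
  have hk_div := integrableOn_div_ofReal_of_support_subset_Ioo hk hsupp
  obtain ⟨C, hC⟩ := exists_norm_expIntTransform_le hk hsupp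
  have hlog : ContinuousOn (fun ε : ℝ => log (1 - exp (-(s + ε)))) (Ici 0) :=
    ContinuousOn.clog (by fun_prop) fun ε hε => one_sub_exp_neg_mem_slitPlane (hre hε) (him ε)
  have hterm (j : ℤ) :
      ContinuousOn (fun ε : ℝ => expIntTransform k (s + ε + 2 * Real.pi * j * I)) (Ici 0) :=
    fun ε _ => (continuousWithinAt_expIntTransform hk_div (by simpa using hs' j)).comp
      (f := fun ε : ℝ => s + ε + 2 * Real.pi * j * I)
      (Continuous.continuousWithinAt (by fun_prop)) fun ε hε => by simpa using hre hε
  have htsum : ContinuousOn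
      (fun ε : ℝ => ∑' j : ℤ, expIntTransform k (s + ε + 2 * Real.pi * j * I)) (Ici 0) :=
    continuousOn_tsum hterm ((summable_inv_add_two_pi_mul_sq s.im).mul_left C) fun j ε hε => by
      simpa using hC (s + ε + 2 * Real.pi * j * I) (by simpa using hre hε) (by simpa using hs' j)
  have heq : EqOn
      (fun ε : ℝ => -log (1 - exp (-(s + ε)))
        - ∑' j : ℤ, expIntTransform k (s + ε + 2 * Real.pi * j * I))
      (fun ε : ℝ => ∑ n ∈ Finset.Ico 1 ⌈b⌉,
        (∫ w in Ioi (n : ℝ), k w) / n * exp (-(s + ε) * n)) (Ici 0) :=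
    EqOn.of_subset_closure (s := Ioi 0)
      (fun ε (hε : 0 < ε) => neg_log_sub_tsum_expIntTransform_of_re_pos hk hsupp hmass
        (by simpa using add_pos_of_nonneg_of_pos hs hε) (him ε))
      (hlog.neg.sub htsum) (by fun_prop) Ioi_subset_Ici_self (closure_Ioi (0 : ℝ)).ge
  simpa using heq self_mem_Ici

end Periodization

section LogPullback

/-- The density in the variable `s = L * log y` of the measure `u y dy` on `y > 0`. -/
noncomputable def logPullback (u : ℝ → ℝ) (L s : ℝ) : ℂ :=
  ((u (Real.exp (s / L)) * (Real.exp (s / L) / L) : ℝ) : ℂ)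

variable {u : ℝ → ℝ} {L : ℝ}

theorem contDiff_logPullback {n : WithTop ℕ∞} (hu : ContDiff ℝ n u) :
    ContDiff ℝ n (logPullback u L) := by
  have hexp : ContDiff ℝ n fun s => Real.exp (s / L) := (contDiff_id.div_const L).exp
  exact ofRealCLM.contDiff.comp ((hu.comp hexp).mul (hexp.div_const L))

theorem support_logPullback_subset (hL : 0 < L) {a b : ℝ}
    (hsupp : Function.support u ⊆ Ioo (Real.exp a) (Real.exp b)) :
    Function.support (logPullback u L) ⊆ Ioo (a * L) (b * L) := by
  intro s hs
  have hu : u (Real.exp (s / L)) ≠ 0 := fun h => hs (by simp [logPullback, h])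
  simpa [lt_div_iff₀ hL, div_lt_iff₀ hL] using hsupp hu

theorem integral_Ioi_logPullback_mul (u : ℝ → ℝ) (hL : 0 < L) (F : ℝ → ℂ) (a : ℝ) :
    ∫ s in Ioi a, logPullback u L s * F s
      = ∫ y in Ioi (Real.exp (a / L)), (u y : ℂ) * F (L * Real.log y) := by
  set G : ℝ → ℂ := fun x => Real.exp x • ((u (Real.exp x) : ℂ) * F (L * x)) with hG
  have hpullback (s : ℝ) : logPullback u L s * F s = L⁻¹ • G (L⁻¹ * s) := by
    simp only [hG, logPullback, inv_mul_eq_div, mul_div_cancel₀ s hL.ne', real_smul]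
    push_cast
    ring
  calc ∫ s in Ioi a, logPullback u L s * F s = L⁻¹ • ∫ s in Ioi a, G (L⁻¹ * s) := by
        simp only [hpullback, integral_smul]
    _ = ∫ x in Ioi (a / L), G x := by
        rw [integral_comp_mul_left_Ioi G a (inv_pos.mpr hL), inv_inv, inv_smul_smul₀ hL.ne',
          inv_mul_eq_div]
    _ = ∫ y in Ioi (Real.exp (a / L)), (u y : ℂ) * F (L * Real.log y) := by
        rw [← integral_comp_exp_Ioi (fun y => (u y : ℂ) * F (L * Real.log y))]
        simp only [Real.log_exp, hG]

theorem integral_Ioi_logPullback (u : ℝ → ℝ) (hL : 0 < L) (a : ℝ) :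
    ∫ s in Ioi a, logPullback u L s = ((∫ y in Ioi (Real.exp (a / L)), u y : ℝ) : ℂ) := by
  simpa [integral_complex_ofReal] using integral_Ioi_logPullback_mul u hL (fun _ => 1) a

theorem intervalIntegral_eq_integral_Ioi {E : Type*} [NormedAddCommGroup E] [NormedSpace ℝ E]
    {f : ℝ → E} {a b : ℝ} (hab : a ≤ b) (hf : ∀ y, b ≤ y → f y = 0) :
    ∫ y in a..b, f y = ∫ y in Ioi a, f y := by
  rw [intervalIntegral.integral_of_le hab]
  refine (setIntegral_eq_of_subset_of_forall_sdiff_eq_zero measurableSet_Ioi Ioc_subset_Ioi_self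
    fun y hy => hf y ?_).symm
  exact le_of_not_ge fun hyb => hy.2 ⟨hy.1, hyb⟩

theorem intervalIntegral_min_eq_integral_Ioi {E : Type*} [NormedAddCommGroup E] [NormedSpace ℝ E]
    {f : ℝ → E} {b : ℝ} (hf : ∀ y, b ≤ y → f y = 0) (a : ℝ) :
    ∫ y in (min a b)..b, f y = ∫ y in Ioi a, f y := by
  rcases le_total a b with hab | hba
  · rw [min_eq_left hab, intervalIntegral_eq_integral_Ioi hab hf]
  · rw [min_eq_right hba, intervalIntegral.integral_same, setIntegral_eq_zero_of_forall_eq_zero]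
    exact fun y hy => hf y (hba.trans (le_of_lt hy))

theorem Ufun_mul_ofReal (hu : ∀ y, Real.exp 1 ≤ y → u y = 0) (hL : 0 < L) (z : ℂ) :
    Ufun u (z * L) = expIntTransform (logPullback u L) z := by
  rw [expIntTransform, integral_Ioi_logPullback_mul u hL (fun s => expInt (z * s)), zero_div,
    Real.exp_zero, Ufun, intervalIntegral_eq_integral_Ioi (Real.one_le_exp zero_le_one)
      fun y hy => by rw [hu y hy, ofReal_zero, zero_mul]]
  simp only [ofReal_mul, mul_assoc]

end LogPullback

section FourierCoefficients

theorem integral_exp_int_mul (n : ℤ) :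
    ∫ ϑ in -Real.pi..Real.pi, exp (I * n * ϑ) = if n = 0 then 2 * (Real.pi : ℂ) else 0 := by
  split_ifs with hn
  · simp [hn, two_mul]
  · rw [integral_exp_mul_complex (mul_ne_zero I_ne_zero (Int.cast_ne_zero.mpr hn)),
      exp_eq_exp_iff_exists_int.mpr ⟨n, ?_⟩, sub_self, zero_div]
    push_cast
    ring

theorem integral_trigPolynomial_mul_exp (S : Finset ℤ) (c : ℤ → ℂ) (m : ℤ) :
    (1 / ((2 * Real.pi : ℝ) : ℂ)) * ∫ ϑ in -Real.pi..Real.pi,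
        (∑ n ∈ S, c n * exp (I * n * ϑ)) * exp (-(I * m * ϑ)) = if m ∈ S then c m else 0 := by
  have hmul (ϑ : ℝ) : (∑ n ∈ S, c n * exp (I * n * ϑ)) * exp (-(I * m * ϑ))
      = ∑ n ∈ S, c n * exp (I * (n - m : ℤ) * ϑ) := by
    rw [Finset.sum_mul]
    refine Finset.sum_congr rfl fun n _ => ?_
    rw [mul_assoc, ← exp_add]
    push_cast
    ring_nf
  simp only [hmul]
  rw [intervalIntegral.integral_finsetSum fun n _ =>
    Continuous.intervalIntegrable (by fun_prop) _ _]
  have hpi : (Real.pi : ℂ) ≠ 0 := ofReal_ne_zero.mpr Real.pi_ne_zero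
  simp only [intervalIntegral.integral_const_mul, integral_exp_int_mul, sub_eq_zero, mul_ite,
    mul_zero, Finset.sum_ite_eq']
  split_ifs
  · push_cast
    field_simp
  · rfl

end FourierCoefficients

section FX

variable {u : ℝ → ℝ} {X : ℝ} {ϑ : ℝ}

theorem ae_ne_two_pi_mul_int : ∀ᵐ ϑ : ℝ, ∀ j : ℤ, ϑ ≠ 2 * Real.pi * j :=
  ae_all_iff.mpr fun _ => Measure.ae_ne volume _

theorem add_two_pi_mul_int_ne_zero (hϑ : ∀ j : ℤ, ϑ ≠ 2 * Real.pi * j) (j : ℤ) :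
    ϑ + 2 * Real.pi * j ≠ 0 := fun h => hϑ (-j) (by push_cast; linarith)

theorem neg_ne_two_pi_mul_int (hϑ : ∀ j : ℤ, ϑ ≠ 2 * Real.pi * j) (j : ℤ) :
    -ϑ ≠ 2 * Real.pi * j := fun h => add_two_pi_mul_int_ne_zero hϑ j (by linarith)

theorem support_logPullback_log_subset (hX : 1 < X)
    (hsupp : Function.support u ⊆ Ioo 1 (Real.exp 1)) :
    Function.support (logPullback u (Real.log X)) ⊆ Ioo 0 (Real.log X) := by
  rw [← Real.exp_zero] at hsupp
  simpa using support_logPullback_subset (Real.log_pos hX) hsupp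

theorem Ufun_eq_expIntTransform (hX : 1 < X) (hsupp : Function.support u ⊆ Ioo 1 (Real.exp 1))
    (ϑ : ℝ) (j : ℤ) : Ufun u (I * ((ϑ : ℂ) + 2 * Real.pi * j) * Real.log X)
      = expIntTransform (logPullback u (Real.log X)) (I * ϑ + 2 * Real.pi * j * I) := by
  rw [Ufun_mul_ofReal (fun _ => eq_zero_of_support_subset_Ioo_of_ge hsupp) (Real.log_pos hX)]
  ring_nf

theorem summable_Ufun (hX : 1 < X) (hu : ContDiff ℝ 2 u)
    (hsupp : Function.support u ⊆ Ioo 1 (Real.exp 1)) (hϑ : ∀ j : ℤ, ϑ ≠ 2 * Real.pi * j) :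
    Summable fun j : ℤ => Ufun u (I * ((ϑ : ℂ) + 2 * Real.pi * j) * Real.log X) := by
  simp only [Ufun_eq_expIntTransform hX hsupp]
  exact summable_expIntTransform (contDiff_logPullback hu)
    (support_logPullback_log_subset hX hsupp) (by simp)
    (by simpa using add_two_pi_mul_int_ne_zero hϑ)

/-- The coefficient of `e^{-inϑ}` in `F_X(ϑ)`, for `n ≥ 1`. -/
noncomputable def coeffFX (u : ℝ → ℝ) (X : ℝ) (n : ℤ) : ℂ :=
  (1 / (n : ℂ)) *
    ((∫ y in (min (Real.exp (n / Real.log X)) (Real.exp 1))..(Real.exp 1), u y : ℝ) : ℂ)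

theorem coeffFX_eq_zero (u : ℝ → ℝ) (hX : 1 < X) {n : ℤ} (hn : Real.log X ≤ n) :
    coeffFX u X n = 0 := by
  have hle : Real.exp 1 ≤ Real.exp (n / Real.log X) :=
    Real.exp_le_exp.mpr ((one_le_div (Real.log_pos hX)).mpr hn)
  rw [coeffFX, min_eq_right hle, intervalIntegral.integral_same, ofReal_zero, mul_zero]

theorem FX_eq_sum (hX : 1 < X) (hu : ContDiff ℝ 2 u)
    (hsupp : Function.support u ⊆ Ioo 1 (Real.exp 1)) (hmass : ∫ y, u y = 1)
    (hϑ : ∀ j : ℤ, ϑ ≠ 2 * Real.pi * j) :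
    FX u X ϑ = ∑ n ∈ Finset.Ico 1 ⌈Real.log X⌉, coeffFX u X n * exp (-(I * n * ϑ)) := by
  have hmass_Ioi : ∫ y in Ioi (1 : ℝ), u y = 1 := by
    refine (setIntegral_eq_integral_of_forall_compl_eq_zero fun y hy => ?_).trans hmass
    exact eq_zero_of_support_subset_Ioo_of_le hsupp (not_lt.mp hy)
  have hmass_log : ∫ s in Ioi (0 : ℝ), logPullback u (Real.log X) s = 1 := by
    rw [integral_Ioi_logPullback u (Real.log_pos hX), zero_div, Real.exp_zero, hmass_Ioi,
      ofReal_one]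
  have hcoeff (n : ℤ) : (∫ s in Ioi (n : ℝ), logPullback u (Real.log X) s) / n = coeffFX u X n := by
    rw [integral_Ioi_logPullback u (Real.log_pos hX), coeffFX, intervalIntegral_min_eq_integral_Ioi
      fun _ => eq_zero_of_support_subset_Ioo_of_ge hsupp, one_div_mul_eq_div]
  simp only [FX, Ufun_eq_expIntTransform hX hsupp]
  rw [neg_log_sub_tsum_expIntTransform (contDiff_logPullback hu)
    (support_logPullback_log_subset hX hsupp) hmass_log (by simp)
    (by simpa using add_two_pi_mul_int_ne_zero hϑ)]
  refine Finset.sum_congr rfl fun n _ => ?_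
  rw [hcoeff]
  ring_nf

theorem integral_FX_neg_mul_exp (hX : 1 < X) (hu : ContDiff ℝ 2 u)
    (hsupp : Function.support u ⊆ Ioo 1 (Real.exp 1)) (hmass : ∫ y, u y = 1) (m : ℤ) :
    (1 / ((2 * Real.pi : ℝ) : ℂ)) *
        ∫ ϑ in -Real.pi..Real.pi, FX u X (-ϑ) * exp (-(I * m * ϑ))
      = if 1 ≤ m then coeffFX u X m else 0 := by
  have hFX : ∀ᵐ ϑ : ℝ, ϑ ∈ uIoc (-Real.pi) Real.pi → FX u X (-ϑ) * exp (-(I * m * ϑ))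
      = (∑ n ∈ Finset.Ico 1 ⌈Real.log X⌉, coeffFX u X n * exp (I * n * ϑ))
        * exp (-(I * m * ϑ)) := by
    filter_upwards [ae_ne_two_pi_mul_int] with ϑ hϑ _
    simp [FX_eq_sum hX hu hsupp hmass (neg_ne_two_pi_mul_int hϑ)]
  rw [intervalIntegral.integral_congr_ae hFX, integral_trigPolynomial_mul_exp]
  by_cases hm : m < ⌈Real.log X⌉
  · simp only [Finset.mem_Ico, hm, and_true]
  · simp [hm, coeffFX_eq_zero u hX (Int.ceil_le.mp (not_lt.mp hm))]

end FX

theorem stmt_5_general (X : ℝ) (hX : 1 < X) (u : ℝ → ℝ) (hu : ContDiff ℝ 2 u)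
    (hu_supp : Function.support u ⊆ Set.Icc 1 (Real.exp 1)) (hu_mass : (∫ y : ℝ, u y) = 1) :
    (∀ ϑ : ℝ, (∀ j : ℤ, ϑ ≠ 2 * Real.pi * j) →
        Summable (fun j : ℤ => Ufun u (Complex.I * ((ϑ : ℂ) + 2 * Real.pi * j) * Real.log X)))
    ∧ MeasureTheory.IntegrableOn (FX u X) (Set.Ioo (-Real.pi) Real.pi)
    ∧ (∀ m : ℤ,
        (1 / ((2 * Real.pi : ℝ) : ℂ)) *
          ∫ ϑ in (-Real.pi)..Real.pi, FX u X (-ϑ) * Complex.exp (-(Complex.I * m * ϑ))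
        = if 1 ≤ m then
            (1 / (m : ℂ)) *
              ((∫ y in (min (Real.exp (m / Real.log X)) (Real.exp 1))..(Real.exp 1), u y : ℝ) : ℂ)
          else 0) := by
  have hsupp := support_subset_Ioo_of_continuous hu.continuous hu_supp
  refine ⟨fun ϑ => summable_Ufun hX hu hsupp, ?_, integral_FX_neg_mul_exp hX hu hsupp hu_mass⟩
  have hcont : Continuous fun ϑ : ℝ =>
      ∑ n ∈ Finset.Ico 1 ⌈Real.log X⌉, coeffFX u X n * exp (-(I * n * ϑ)) := by fun_prop
  refine (hcont.integrableOn_Icc.mono_set Ioo_subset_Icc_self).congr (ae_restrict_of_ae ?_)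
  filter_upwards [ae_ne_two_pi_mul_int] with ϑ hϑ using (FX_eq_sum hX hu hsupp hu_mass hϑ).symm

/-- Lemma 5.1 of the paper (normalization k = 1). -/
theorem stmt_5 (X : ℝ) (hX : 1 < X) (u : ℝ → ℝ)
    (hu_smooth : ContDiff ℝ (⊤ : ℕ∞) u) (hu_nonneg : ∀ y, 0 ≤ u y)
    (hu_supp : Function.support u ⊆ Set.Icc 1 (Real.exp 1))
    (hu_mass : (∫ y : ℝ, u y) = 1) :
    (∀ ϑ : ℝ, (∀ j : ℤ, ϑ ≠ 2 * Real.pi * j) →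
        Summable (fun j : ℤ => Ufun u (Complex.I * ((ϑ : ℂ) + 2 * Real.pi * j) * Real.log X)))
    ∧ MeasureTheory.IntegrableOn (FX u X) (Set.Ioo (-Real.pi) Real.pi)
    ∧ (∀ m : ℤ,
        (1 / ((2 * Real.pi : ℝ) : ℂ)) *
          ∫ ϑ in (-Real.pi)..Real.pi, FX u X (-ϑ) * Complex.exp (-(Complex.I * m * ϑ))
        = if 1 ≤ m then
            (1 / (m : ℂ)) *
              ((∫ y in (min (Real.exp (m / Real.log X)) (Real.exp 1))..(Real.exp 1), u y : ℝ) : ℂ)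
          else 0) :=
  stmt_5_general X hX u (contDiff_infty.mp hu_smooth 2) hu_supp hu_mass
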